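/- Let N ≥ 2 and 0 < s < 1/2, and set r(s) = s/(1-s). Let {t_n}_{n=1}^∞ ⊂ (0,1) be a decreasing sequence converging to zero which belongs to ℓ^{r(s),∞}(ℕ). Then there exists a constant C, independent of f, such that ‖ sup_{n ∈ ℕ} |e^{i t_n L}f| ‖_{L²(B(0,1))} ≤ C ‖f‖_{H^s(ℝ^N)} for all f ∈ H^s(ℝ^N). -/

import Mathlib

/-!
The proof splits frequencies into dyadic shells `‖ξ‖ ∼ 2 ^ k` and compares, for each `n`, the time
`t_n` with the scale `2 ^ (-2(1 - s)k)`. Let `j(n)` be the integer with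
`2 ^ (-2(1 - s)(j(n) + 1)) < t_n ≤ 2 ^ (-2(1 - s)j(n))`. Writing `f_k` for the part of `f` on the
shell `k` and `Q_j f` for the part beyond the shell `j`,

`e^{i t_n L} f = f - Q_{j(n)} f + e^{i t_n L} Q_{j(n)} f + ∑_{k ≤ j(n)} (e^{i t_n L} f_k - f_k)`.

The two high-frequency terms are estimated by replacing the supremum over `n` by an `ℓ²` sum and
applying Plancherel at each fixed time (`lintegral_evol_sq_le`). The shell `κ` is then counted once
for every `n` with `j(n) < κ`, and the `ℓ^{r,∞}` condition with `r = s / (1 - s)` bounds the number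
of these by a multiple of `2 ^ (2sκ)` (`count_le`), which is the weight of the `H^s` norm.

For the low shells, `k ≤ j(n)` means that only the times `0 < t ≤ 2 ^ (-2(1 - s)k)` matter. There
the Sobolev inequality in time (`weighted_sobolev`) controls the increments, the time derivative
costing `4 ^ k` because the symbol satisfies `|∑ᵢ sgᵢ ξᵢ²| ≤ ‖ξ‖²`. The weight `u ^ (-1/2)`
in that inequality, together with geometric weights in Cauchy–Schwarz (`enorm_sum_sq_le`), makes the bounds on the individual shells summable without any dependence on
`n`, with total weight `2 ^ (2sk)` again. Both parts are put together in `lintegral_maximal_le`.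

Initial data with a non-integrable Fourier transform are harmless in this encoding: the Bochner
integrals defining their evolution all vanish.
-/

open MeasureTheory Real Filter

noncomputable section

/-- The nonelliptic Schrödinger evolution `e^{itL}f` with signature `sg`, expressed through
the Fourier transform `fhat` of the initial datum:
`e^{itL}f(x) = ∫ e^{i(x·ξ + t ∑ᵢ sgᵢ ξᵢ²)} f̂(ξ) dξ`. -/
def nonellipticEvol {N : ℕ} (sg : Fin N → ℝ) (fhat : EuclideanSpace ℝ (Fin N) → ℂ) (t : ℝ)
    (x : EuclideanSpace ℝ (Fin N)) : ℂ :=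
  ∫ ξ : EuclideanSpace ℝ (Fin N),
    Complex.exp (Complex.I * (((∑ i, x i * ξ i) + t * ∑ i, sg i * ξ i ^ 2 : ℝ) : ℂ)) * fhat ξ

/-- The squared `H^s` norm, expressed through the Fourier transform. -/
def sobolevNormSq {N : ℕ} (s : ℝ) (fhat : EuclideanSpace ℝ (Fin N) → ℂ) : ℝ :=
  ∫ ξ : EuclideanSpace ℝ (Fin N), (1 + ‖ξ‖ ^ 2) ^ s * ‖fhat ξ‖ ^ 2

/-- Membership of a sequence in `ℓ^{r,∞}(ℕ)`:
`sup_{b>0} b^r · #{n : t_n > b} < ∞`. -/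
def weakLr (r : ℝ) (t : ℕ → ℝ) : Prop :=
  ∃ A : ℝ, ∀ b : ℝ, 0 < b → b ^ r * (Nat.card {n : ℕ | b < t n} : ℝ) ≤ A

open scoped FourierTransform SchwartzMap ENNReal

/-! ### Plancherel for integrable functions, and the evolution operator -/

/-- For `g ∈ L¹ ∩ L²` the inverse Fourier integral agrees almost everywhere with the `L²` inverse
Fourier transform, since both define the same tempered distribution. -/
theorem fourierInv_ae_eq_Lp {V : Type*} [NormedAddCommGroup V] [InnerProductSpace ℝ V]
    [MeasurableSpace V] [BorelSpace V] [FiniteDimensional ℝ V] {g : V → ℂ}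
    (h1 : Integrable g) (h2 : MemLp g 2) :
    (𝓕⁻ g) =ᵐ[volume] (𝓕⁻ (h2.toLp g) : Lp (α := V) ℂ 2 volume) := by
  have hc : Continuous (𝓕⁻ g) :=
    VectorFourier.fourierIntegral_continuous Real.continuous_fourierChar
      (by exact (continuous_fst.inner continuous_snd).neg) h1
  apply ae_eq_of_integral_contDiff_smul_eq hc.locallyIntegrable
    ((Lp.memLp _).locallyIntegrable (by norm_num))
  intro φ hφ hφc
  have hψc : HasCompactSupport (fun x => (φ x : ℂ)) := hφc.comp_left (g := fun r : ℝ => (r : ℂ)) rfl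
  have hψ : ContDiff ℝ ((⊤ : ℕ∞) : WithTop ℕ∞) (fun x => (φ x : ℂ)) :=
    Complex.ofRealCLM.contDiff.comp hφ
  set ψ : 𝓢(V, ℂ) := hψc.toSchwartzMap hψ with hψdef
  have hψx : ∀ x, ψ x = (φ x : ℂ) := fun x => rfl
  have key := congrArg (fun T : 𝓢'(V, ℂ) => T ψ) (Lp.fourierInv_toTemperedDistribution_eq (h2.toLp g))
  simp only [TemperedDistribution.fourierInv_apply, Lp.toTemperedDistribution_apply] at key
  have e1 : ∫ x, φ x • ((𝓕⁻ (h2.toLp g) : Lp (α := V) ℂ 2 volume) : V → ℂ) x =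
      ∫ x, ψ x • ((𝓕⁻ (h2.toLp g) : Lp (α := V) ℂ 2 volume) : V → ℂ) x := by
    simp [hψx]
  rw [e1, ← key]
  have e2 : ∫ x, (𝓕⁻ ψ) x • (h2.toLp g : V → ℂ) x = ∫ x, (𝓕⁻ ψ) x • g x := by
    apply integral_congr_ae
    filter_upwards [h2.coeFn_toLp] with x hx
    rw [hx]
  rw [e2]
  have e3 := VectorFourier.integral_fourierIntegral_smul_eq_flip (e := Real.fourierChar)
    (L := -(innerₗ V)) (μ := volume) (ν := volume) (f := ψ) (g := g) Real.continuous_fourierChar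
    (by exact (continuous_fst.inner continuous_snd).neg) ψ.integrable h1
  have e4 : ∀ ξ, VectorFourier.fourierIntegral Real.fourierChar volume (-(innerₗ V)) (⇑ψ) ξ
      = (𝓕⁻ ψ) ξ := by
    intro ξ
    rw [SchwartzMap.fourierInv_coe, Real.fourierInv_eq]
    simp [VectorFourier.fourierIntegral]
  have e5 : ∀ ξ, VectorFourier.fourierIntegral Real.fourierChar volume (-(innerₗ V)).flip g ξ
      = (𝓕⁻ g) ξ := by
    intro ξ
    rw [Real.fourierInv_eq]
    simp [VectorFourier.fourierIntegral, real_inner_comm]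
  simp only [e4, e5] at e3
  rw [e3]
  simp [hψx]

/-- Plancherel's identity for the inverse Fourier integral of a function in `L¹ ∩ L²`. -/
theorem lintegral_fourierInv_sq {V : Type*} [NormedAddCommGroup V] [InnerProductSpace ℝ V]
    [MeasurableSpace V] [BorelSpace V] [FiniteDimensional ℝ V] {g : V → ℂ}
    (h1 : Integrable g) (h2 : MemLp g 2) :
    ∫⁻ x, ‖𝓕⁻ g x‖ₑ ^ 2 = ∫⁻ x, ‖g x‖ₑ ^ 2 := by
  have h : eLpNorm (𝓕⁻ g) 2 volume = eLpNorm g 2 volume := by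
    rw [eLpNorm_congr_ae (fourierInv_ae_eq_Lp h1 h2)]
    have hn : ‖(𝓕⁻ (h2.toLp g) : Lp (α := V) ℂ 2 volume)‖ = ‖h2.toLp g‖ :=
      (Lp.fourierTransformₗᵢ V ℂ).symm.norm_map _
    rw [← Lp.enorm_def, ← enorm_norm, hn, enorm_norm, Lp.enorm_toLp]
  rw [eLpNorm_eq_lintegral_rpow_enorm_toReal (by norm_num) (by norm_num),
    eLpNorm_eq_lintegral_rpow_enorm_toReal (by norm_num) (by norm_num)] at h
  have h' := congrArg (fun y : ℝ≥0∞ => y ^ (2 : ℝ)) h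
  simp only [← ENNReal.rpow_mul] at h'
  norm_num at h'
  exact h'

/-- The quadratic form `q(ξ) = ∑ᵢ sgᵢ ξᵢ²`, the symbol of `L`; multiplication by `i q` on the
Fourier side is the time derivative of the evolution. -/
def phaseQ {N : ℕ} (sg : Fin N → ℝ) (ξ : EuclideanSpace ℝ (Fin N)) : ℝ := ∑ i, sg i * ξ i ^ 2

theorem continuous_phaseQ {N : ℕ} (sg : Fin N → ℝ) : Continuous (phaseQ sg) := by
  unfold phaseQ
  fun_prop

theorem abs_phaseQ_le {N : ℕ} {sg : Fin N → ℝ} (hsg : ∀ i, sg i = 1 ∨ sg i = -1)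
    (ξ : EuclideanSpace ℝ (Fin N)) : |phaseQ sg ξ| ≤ ‖ξ‖ ^ 2 := by
  rw [EuclideanSpace.norm_sq_eq]
  refine (Finset.abs_sum_le_sum_abs _ _).trans (Finset.sum_le_sum fun i _ => ?_)
  rcases hsg i with h | h <;> simp [h]

section evol

variable {N : ℕ} {sg : Fin N → ℝ} {g : EuclideanSpace ℝ (Fin N) → ℂ}

theorem norm_osc (r : ℝ) : ‖Complex.exp (Complex.I * (r : ℂ))‖ = 1 := by
  rw [mul_comm]; exact Complex.norm_exp_ofReal_mul_I r

theorem aesm_evol (t : ℝ) (x : EuclideanSpace ℝ (Fin N)) (hg : AEStronglyMeasurable g) :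
    AEStronglyMeasurable (fun ξ : EuclideanSpace ℝ (Fin N) =>
      Complex.exp (Complex.I * (((∑ i, x i * ξ i) + t * ∑ i, sg i * ξ i ^ 2 : ℝ) : ℂ)) * g ξ) := by
  refine AEStronglyMeasurable.mul (Continuous.aestronglyMeasurable ?_) hg
  fun_prop

theorem integrable_evol (t : ℝ) (x : EuclideanSpace ℝ (Fin N)) (hg : Integrable g) :
    Integrable (fun ξ : EuclideanSpace ℝ (Fin N) =>
      Complex.exp (Complex.I * (((∑ i, x i * ξ i) + t * ∑ i, sg i * ξ i ^ 2 : ℝ) : ℂ)) * g ξ) := by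
  refine hg.mono (aesm_evol t x hg.1) (ae_of_all _ fun ξ => ?_)
  rw [norm_mul, norm_osc, one_mul]

/-- The evolution is bounded from `L²(dξ)` to `L²(dx)`, uniformly in time. The factor `(2π)^N` comes
from the unnormalised kernel `e^{ix·ξ}`, a rescaling of Mathlib's Fourier kernel by `2π`. -/
theorem lintegral_evol_sq_le (t : ℝ) (hg : Integrable g) :
    ∫⁻ x, ‖nonellipticEvol sg g t x‖ₑ ^ 2 ≤
      ENNReal.ofReal ((2 * π) ^ N) * ∫⁻ ξ, ‖g ξ‖ₑ ^ 2 := by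
  by_cases hfin : ∫⁻ ξ, ‖g ξ‖ₑ ^ 2 = ∞
  · rw [hfin, ENNReal.mul_top]
    · exact le_top
    · simp only [ne_eq, ENNReal.ofReal_eq_zero, not_le]; positivity
  set G : EuclideanSpace ℝ (Fin N) → ℂ := fun ξ =>
    Complex.exp (Complex.I * ((t * ∑ i, sg i * ξ i ^ 2 : ℝ) : ℂ)) * g ξ with hG
  have hGn : ∀ ξ, ‖G ξ‖ₑ = ‖g ξ‖ₑ := fun ξ => by
    rw [← ofReal_norm, ← ofReal_norm, hG, norm_mul, norm_osc, one_mul]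
  have hG1 : Integrable G := by
    have := integrable_evol (sg := sg) t 0 hg
    simpa [hG] using this
  have hG2 : MemLp G 2 := by
    refine ⟨hG1.1, ?_⟩
    rw [eLpNorm_eq_lintegral_rpow_enorm_toReal (by norm_num) (by norm_num)]
    refine ENNReal.rpow_lt_top_of_nonneg (by norm_num) ?_
    simpa [hGn] using hfin
  have hV : ∀ x, nonellipticEvol sg g t x = 𝓕⁻ G ((2 * π)⁻¹ • x) := by
    intro x
    rw [Real.fourierInv_eq', nonellipticEvol]
    congr 1
    ext ξ
    rw [hG, smul_eq_mul, ← mul_assoc, ← Complex.exp_add]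
    congr 2
    have : 2 * π * inner ℝ ξ ((2 * π)⁻¹ • x) = ∑ i, x i * ξ i := by
      rw [inner_smul_right, PiLp.inner_apply]
      field_simp
      simp
    rw [this]
    push_cast
    ring
  simp_rw [hV]
  have hne : (2 * π)⁻¹ ≠ 0 := by positivity
  rw [← (measurableEmbedding_const_smul₀ hne).lintegral_map
    (fun y => ‖𝓕⁻ G y‖ₑ ^ 2), Measure.map_addHaar_smul _ hne, lintegral_smul_measure,
    lintegral_fourierInv_sq hG1 hG2, finrank_euclideanSpace_fin]
  simp_rw [hGn]
  rw [smul_eq_mul, inv_pow, inv_inv, abs_of_nonneg (by positivity)]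

theorem continuous_evol (hg : Integrable g) :
    Continuous (fun p : ℝ × EuclideanSpace ℝ (Fin N) => nonellipticEvol sg g p.1 p.2) := by
  unfold nonellipticEvol
  refine continuous_of_dominated (bound := fun ξ => ‖g ξ‖) (fun p => aesm_evol p.1 p.2 hg.1)
    (fun p => ae_of_all _ fun ξ => ?_) hg.norm (ae_of_all _ fun ξ => ?_)
  · rw [norm_mul, norm_osc, one_mul]
  · fun_prop

theorem hasDerivAt_evol (hg : Integrable g)
    (hqg : Integrable (fun ξ => Complex.I * (phaseQ sg ξ : ℂ) * g ξ)) (t : ℝ)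
    (x : EuclideanSpace ℝ (Fin N)) :
    HasDerivAt (fun u => nonellipticEvol sg g u x)
      (nonellipticEvol sg (fun ξ => Complex.I * (phaseQ sg ξ : ℂ) * g ξ) t x) t := by
  unfold nonellipticEvol
  refine (hasDerivAt_integral_of_dominated_loc_of_deriv_le (s := Set.univ)
    (F' := fun (u : ℝ) (ξ : EuclideanSpace ℝ (Fin N)) =>
      Complex.exp (Complex.I * (((∑ i, x i * ξ i) + u * ∑ i, sg i * ξ i ^ 2 : ℝ) : ℂ)) *
        (Complex.I * (phaseQ sg ξ : ℂ) * g ξ))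
    (bound := fun ξ => ‖Complex.I * (phaseQ sg ξ : ℂ) * g ξ‖) Filter.univ_mem
    (Eventually.of_forall fun u => aesm_evol u x hg.1) (integrable_evol t x hg)
    (aesm_evol t x hqg.1) (ae_of_all _ fun ξ u _ => ?_) hqg.norm
    (ae_of_all _ fun ξ u _ => ?_)).2
  · rw [norm_mul, norm_osc, one_mul]
  · have h1 : HasDerivAt (fun u : ℝ => (((∑ i, x i * ξ i) + u * ∑ i, sg i * ξ i ^ 2 : ℝ)))
        (phaseQ sg ξ) u := by
      simpa [phaseQ] using ((hasDerivAt_id u).mul_const (∑ i, sg i * ξ i ^ 2)).const_add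
        (∑ i, x i * ξ i)
    have h2 := ((h1.ofReal_comp.const_mul Complex.I).cexp).mul_const (g ξ)
    rw [mul_assoc] at h2
    exact h2

end evol

/-! ### Dyadic frequency shells -/

section shells

variable {N : ℕ}

/-- The index of the dyadic shell of `ξ`: `0` for `‖ξ‖ ≤ 1`, and the `k ≥ 1` with
`2 ^ (k - 1) < ‖ξ‖ ≤ 2 ^ k` otherwise. The origin lies in shell `0` because `logb 2 0 = 0`. -/
def shell (ξ : EuclideanSpace ℝ (Fin N)) : ℕ := ⌈Real.logb 2 ‖ξ‖⌉₊

theorem measurable_shell : Measurable (shell (N := N)) := by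
  have h : Measurable fun ξ : EuclideanSpace ℝ (Fin N) => Real.logb 2 ‖ξ‖ := by
    unfold Real.logb
    exact (Real.measurable_log.comp measurable_norm).div_const _
  exact Nat.measurable_ceil.comp h

theorem norm_le_two_pow_shell (ξ : EuclideanSpace ℝ (Fin N)) : ‖ξ‖ ≤ 2 ^ shell ξ := by
  rcases (norm_nonneg ξ).eq_or_lt with h | h
  · rw [← h]; positivity
  · have h1 : Real.logb 2 ‖ξ‖ ≤ (shell ξ : ℝ) := Nat.le_ceil _
    rw [Real.logb_le_iff_le_rpow (by norm_num) h] at h1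
    exact_mod_cast h1

theorem four_pow_shell_le (ξ : EuclideanSpace ℝ (Fin N)) :
    (4 : ℝ) ^ shell ξ ≤ 4 * (1 + ‖ξ‖ ^ 2) := by
  rcases Nat.eq_zero_or_pos (shell ξ) with h | h
  · rw [h]; nlinarith [sq_nonneg ‖ξ‖]
  · obtain ⟨m, hm⟩ : ∃ m, shell ξ = m + 1 := ⟨shell ξ - 1, by omega⟩
    have h1 : (m : ℝ) < Real.logb 2 ‖ξ‖ := by
      apply Nat.lt_ceil.1
      change m < shell ξ
      omega
    have h0 : 0 < ‖ξ‖ := by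
      rcases (norm_nonneg ξ).eq_or_lt with h' | h'
      · rw [← h'] at h1; simp at h1
        exact absurd h1 (not_lt.2 (Nat.cast_nonneg m))
      · exact h'
    rw [Real.lt_logb_iff_rpow_lt (by norm_num) h0, Real.rpow_natCast] at h1
    have h2 : (4 : ℝ) ^ m = (2 ^ m) ^ 2 := by rw [← pow_mul, mul_comm, pow_mul]; norm_num
    rw [hm, pow_succ, h2]
    have h3 : ((2 : ℝ) ^ m) ^ 2 ≤ ‖ξ‖ ^ 2 := by gcongr
    linarith

end shells

/-! ### A weighted Sobolev inequality in time -/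

theorem lintegral_rpow_neg_half {β : ℝ} (hβ : 0 ≤ β) :
    ∫⁻ u in Set.Ioc 0 β, ENNReal.ofReal (u ^ (-(1 / 2) : ℝ)) = ENNReal.ofReal (2 * √β) := by
  have hi : IntervalIntegrable (fun u : ℝ => u ^ (-(1 / 2) : ℝ)) volume 0 β :=
    intervalIntegral.intervalIntegrable_rpow' (by norm_num)
  rw [← ofReal_integral_eq_lintegral_ofReal
    ((intervalIntegrable_iff_integrableOn_Ioc_of_le hβ).1 hi), ← intervalIntegral.integral_of_le hβ,
    integral_rpow (Or.inl (by norm_num)), Real.sqrt_eq_rpow]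
  · congr 1
    rw [Real.zero_rpow (by norm_num), show (-(1 / 2) + 1 : ℝ) = 1 / 2 by norm_num]
    ring
  · filter_upwards [ae_restrict_mem measurableSet_Ioc] with u hu
    exact Real.rpow_nonneg hu.1.le _

/-- One-dimensional Sobolev inequality for a function vanishing at time `0`, with a weight
`u ^ (-1/2)` on both sides. It follows from `|D(t)|² = ∫₀ᵗ 2⟨D, D'⟩` and
`2ab ≤ l a² + l⁻¹ b²`, as the weight is decreasing and so only grows under the integral. -/
theorem weighted_sobolev {D D' : ℝ → ℂ} (hD : ∀ u, HasDerivAt D (D' u) u) (hD' : Continuous D')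
    (h0 : D 0 = 0) {l : ℝ} (hl : 0 < l) {t β : ℝ} (ht : 0 < t) (htβ : t ≤ β) :
    ENNReal.ofReal (t ^ (-(1 / 2) : ℝ)) * ‖D t‖ₑ ^ 2 ≤
      ∫⁻ u in Set.Ioc 0 β, ENNReal.ofReal (u ^ (-(1 / 2) : ℝ)) *
        (ENNReal.ofReal l * ‖D u‖ₑ ^ 2 + ENNReal.ofReal l⁻¹ * ‖D' u‖ₑ ^ 2) := by
  have hDc : Continuous D := continuous_iff_continuousAt.2 fun u => (hD u).continuousAt
  have hc : Continuous fun u => 2 * inner ℝ (D u) (D' u) :=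
    continuous_const.mul (hDc.inner hD')
  have hc2 : Continuous fun u => l * ‖D u‖ ^ 2 + l⁻¹ * ‖D' u‖ ^ 2 := by fun_prop
  have e1 : ‖D t‖ ^ 2 = ∫ u in (0 : ℝ)..t, 2 * inner ℝ (D u) (D' u) := by
    rw [intervalIntegral.integral_eq_sub_of_hasDerivAt (fun u _ => (hD u).norm_sq)
      (hc.intervalIntegrable _ _), h0]
    simp
  have e2 : ‖D t‖ ^ 2 ≤ ∫ u in Set.Ioc 0 t, (l * ‖D u‖ ^ 2 + l⁻¹ * ‖D' u‖ ^ 2) := by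
    rw [e1, ← intervalIntegral.integral_of_le ht.le]
    refine intervalIntegral.integral_mono_on ht.le (hc.intervalIntegrable _ _)
      (hc2.intervalIntegrable _ _) fun u _ => ?_
    have h1 := real_inner_le_norm (D u) (D' u)
    have h2 : l * ‖D u‖ ^ 2 + l⁻¹ * ‖D' u‖ ^ 2 - 2 * (‖D u‖ * ‖D' u‖) =
        l⁻¹ * (l * ‖D u‖ - ‖D' u‖) ^ 2 := by field_simp; ring
    have h3 : 0 ≤ l⁻¹ * (l * ‖D u‖ - ‖D' u‖) ^ 2 := by positivity
    linarith
  have e3 : ‖D t‖ₑ ^ 2 ≤ ∫⁻ u in Set.Ioc 0 t,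
      (ENNReal.ofReal l * ‖D u‖ₑ ^ 2 + ENNReal.ofReal l⁻¹ * ‖D' u‖ₑ ^ 2) := by
    rw [← ofReal_norm, ← ENNReal.ofReal_pow (norm_nonneg _)]
    refine (ENNReal.ofReal_le_ofReal e2).trans (le_of_eq ?_)
    rw [ofReal_integral_eq_lintegral_ofReal (hc2.integrableOn_Ioc)
      (ae_of_all _ fun u => by positivity)]
    congr 1
    ext u
    rw [ENNReal.ofReal_add (by positivity) (by positivity), ENNReal.ofReal_mul hl.le,
      ENNReal.ofReal_mul (by positivity), ENNReal.ofReal_pow (norm_nonneg _),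
      ENNReal.ofReal_pow (norm_nonneg _), ofReal_norm, ofReal_norm]
  calc _ ≤ ENNReal.ofReal (t ^ (-(1 / 2) : ℝ)) * ∫⁻ u in Set.Ioc 0 t,
      (ENNReal.ofReal l * ‖D u‖ₑ ^ 2 + ENNReal.ofReal l⁻¹ * ‖D' u‖ₑ ^ 2) := by gcongr
    _ = ∫⁻ u in Set.Ioc 0 t, ENNReal.ofReal (t ^ (-(1 / 2) : ℝ)) *
      (ENNReal.ofReal l * ‖D u‖ₑ ^ 2 + ENNReal.ofReal l⁻¹ * ‖D' u‖ₑ ^ 2) :=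
        (lintegral_const_mul' _ _ ENNReal.ofReal_ne_top).symm
    _ ≤ ∫⁻ u in Set.Ioc 0 t, ENNReal.ofReal (u ^ (-(1 / 2) : ℝ)) *
      (ENNReal.ofReal l * ‖D u‖ₑ ^ 2 + ENNReal.ofReal l⁻¹ * ‖D' u‖ₑ ^ 2) := by
        refine setLIntegral_mono' measurableSet_Ioc fun u hu => ?_
        gcongr ?_ * _
        exact ENNReal.ofReal_le_ofReal
          (Real.rpow_le_rpow_of_nonpos hu.1 hu.2 (by norm_num))
    _ ≤ _ := lintegral_mono_set (Set.Ioc_subset_Ioc_right htβ)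

/-! ### The low-frequency energy -/

section energy

variable {N : ℕ} {sg : Fin N → ℝ} {g : EuclideanSpace ℝ (Fin N) → ℂ}

/-- The right-hand side of `weighted_sobolev` at the point `x`, on the time interval `(0, β]`, for
the increment `D(u) = e^{iuL}g(x) - g(x)` and with parameter `l = R²`, where `R` bounds the
frequencies of `g`. It dominates `t ^ (-1/2) |D(t)|²` simultaneously for all `t ∈ (0, β]`. -/
def lowEnergy (sg : Fin N → ℝ) (g : EuclideanSpace ℝ (Fin N) → ℂ) (R β : ℝ)
    (x : EuclideanSpace ℝ (Fin N)) : ℝ≥0∞ :=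
  ∫⁻ u in Set.Ioc 0 β, ENNReal.ofReal (u ^ (-(1 / 2) : ℝ)) *
    (ENNReal.ofReal (R ^ 2) * ‖nonellipticEvol sg g u x - nonellipticEvol sg g 0 x‖ₑ ^ 2 +
      ENNReal.ofReal (R ^ 2)⁻¹ *
        ‖nonellipticEvol sg (fun ξ => Complex.I * (phaseQ sg ξ : ℂ) * g ξ) u x‖ₑ ^ 2)

theorem norm_gen_le (hsg : ∀ i, sg i = 1 ∨ sg i = -1) {R : ℝ}
    (hR : ∀ ξ, g ξ ≠ 0 → ‖ξ‖ ≤ R) (ξ : EuclideanSpace ℝ (Fin N)) :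
    ‖Complex.I * (phaseQ sg ξ : ℂ) * g ξ‖ ≤ R ^ 2 * ‖g ξ‖ := by
  by_cases h : g ξ = 0
  · simp [h]
  · rw [norm_mul, norm_mul, Complex.norm_I, one_mul, Complex.norm_real, Real.norm_eq_abs]
    gcongr
    refine (abs_phaseQ_le hsg ξ).trans ?_
    have := hR ξ h
    gcongr

theorem integrable_gen (hsg : ∀ i, sg i = 1 ∨ sg i = -1) {R : ℝ}
    (hR : ∀ ξ, g ξ ≠ 0 → ‖ξ‖ ≤ R) (hg : Integrable g) :
    Integrable (fun ξ => Complex.I * (phaseQ sg ξ : ℂ) * g ξ) := by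
  refine (hg.norm.const_mul (R ^ 2)).mono' ?_ (ae_of_all _ fun ξ => norm_gen_le hsg hR ξ)
  refine AEStronglyMeasurable.mul (Continuous.aestronglyMeasurable ?_) hg.1
  have := continuous_phaseQ sg
  fun_prop

theorem measurable_lowIntegrand
    (hg : Integrable g) (hqg : Integrable (fun ξ => Complex.I * (phaseQ sg ξ : ℂ) * g ξ)) (R : ℝ) :
    Measurable (fun p : EuclideanSpace ℝ (Fin N) × ℝ => ENNReal.ofReal (p.2 ^ (-(1 / 2) : ℝ)) *
    (ENNReal.ofReal (R ^ 2) * ‖nonellipticEvol sg g p.2 p.1 - nonellipticEvol sg g 0 p.1‖ₑ ^ 2 +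
      ENNReal.ofReal (R ^ 2)⁻¹ *
        ‖nonellipticEvol sg (fun ξ => Complex.I * (phaseQ sg ξ : ℂ) * g ξ) p.2 p.1‖ₑ ^ 2)) := by
  have h1 : Measurable fun p : EuclideanSpace ℝ (Fin N) × ℝ => nonellipticEvol sg g p.2 p.1 :=
    ((continuous_evol hg).comp continuous_swap).measurable
  have h2 : Measurable fun p : EuclideanSpace ℝ (Fin N) × ℝ => nonellipticEvol sg g 0 p.1 :=
    ((continuous_evol hg).comp (continuous_const.prodMk continuous_fst)).measurable
  have h3 := ((continuous_evol (sg := sg) hqg).comp continuous_swap).measurable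
  have h4 : Measurable fun p : EuclideanSpace ℝ (Fin N) × ℝ =>
      ENNReal.ofReal (p.2 ^ (-(1 / 2) : ℝ)) := (measurable_snd.pow_const _).ennreal_ofReal
  exact h4.mul ((((h1.sub h2).enorm.pow_const 2).const_mul _).add
    ((h3.enorm.pow_const 2).const_mul _))

theorem measurable_lowEnergy
    (hg : Integrable g) (hqg : Integrable (fun ξ => Complex.I * (phaseQ sg ξ : ℂ) * g ξ)) (R β : ℝ) :
    Measurable (lowEnergy sg g R β) :=
  (measurable_lowIntegrand hg hqg R).lintegral_prod_right'

theorem continuous_evol_time (hg : Integrable g) (x : EuclideanSpace ℝ (Fin N)) :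
    Continuous fun u => nonellipticEvol sg g u x := by
  have h1 : Continuous fun u : ℝ => (u, x) := by fun_prop
  have h2 := (continuous_evol (sg := sg) hg).comp h1
  simpa only [Function.comp_def] using h2

theorem le_lowEnergy
    (hg : Integrable g) (hqg : Integrable (fun ξ => Complex.I * (phaseQ sg ξ : ℂ) * g ξ))
    {R : ℝ} (hR0 : 0 < R) {t β : ℝ} (ht : 0 < t) (htβ : t ≤ β) (x : EuclideanSpace ℝ (Fin N)) :
    ENNReal.ofReal (t ^ (-(1 / 2) : ℝ)) *
      ‖nonellipticEvol sg g t x - nonellipticEvol sg g 0 x‖ₑ ^ 2 ≤ lowEnergy sg g R β x := by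
  have hd : ∀ u, HasDerivAt (fun u => nonellipticEvol sg g u x - nonellipticEvol sg g 0 x)
      (nonellipticEvol sg (fun ξ => Complex.I * (phaseQ sg ξ : ℂ) * g ξ) u x) u :=
    fun u => (hasDerivAt_evol hg hqg u x).sub_const _
  have hc : Continuous fun u =>
      nonellipticEvol sg (fun ξ => Complex.I * (phaseQ sg ξ : ℂ) * g ξ) u x :=
    continuous_evol_time hqg x
  have h0 : (fun u => nonellipticEvol sg g u x - nonellipticEvol sg g 0 x) 0 = 0 := by simp
  exact weighted_sobolev hd hc h0 (l := R ^ 2) (by positivity) ht htβ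

theorem enorm_sub_sq_le (a b : ℂ) : ‖a - b‖ₑ ^ 2 ≤ 2 * ‖a‖ₑ ^ 2 + 2 * ‖b‖ₑ ^ 2 := by
  have h : ‖a - b‖ ^ 2 ≤ 2 * ‖a‖ ^ 2 + 2 * ‖b‖ ^ 2 := by
    have h1 := norm_sub_le a b
    have h2 : ‖a - b‖ ^ 2 ≤ (‖a‖ + ‖b‖) ^ 2 := by gcongr
    nlinarith [sq_nonneg (‖a‖ - ‖b‖)]
  have h' := ENNReal.ofReal_le_ofReal h
  rw [ENNReal.ofReal_add (by positivity) (by positivity), ENNReal.ofReal_mul (by norm_num),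
    ENNReal.ofReal_mul (by norm_num)] at h'
  simpa [ENNReal.ofReal_pow, ofReal_norm] using h'

/-- A frequency localisation `‖ξ‖ ≤ R` makes the time derivative cost `R²`, which the choice
`l = R²` balances; the weight then integrates to `2√β`. -/
theorem lintegral_lowEnergy_le (hsg : ∀ i, sg i = 1 ∨ sg i = -1) {R : ℝ} (hR0 : 0 < R)
    (hR : ∀ ξ, g ξ ≠ 0 → ‖ξ‖ ≤ R) (hg : Integrable g) {β : ℝ} (hβ : 0 ≤ β) :
    ∫⁻ x, lowEnergy sg g R β x ≤
      ENNReal.ofReal (10 * (2 * π) ^ N * (R ^ 2 * √β)) * ∫⁻ ξ, ‖g ξ‖ₑ ^ 2 := by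
  have hqg := integrable_gen hsg hR hg
  unfold lowEnergy
  rw [lintegral_lintegral_swap (measurable_lowIntegrand hg hqg R).aemeasurable]
  set M := ∫⁻ ξ, ‖g ξ‖ₑ ^ 2 with hM
  have hmD : ∀ u, Measurable fun x => nonellipticEvol sg g u x := fun u =>
    ((continuous_evol hg).comp (continuous_const.prodMk continuous_id)).measurable
  have hmD' : ∀ u, Measurable fun x =>
      nonellipticEvol sg (fun ξ => Complex.I * (phaseQ sg ξ : ℂ) * g ξ) u x := fun u =>
    ((continuous_evol hqg).comp (continuous_const.prodMk continuous_id)).measurable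
  have hA : ∀ u, ∫⁻ x, ‖nonellipticEvol sg g u x - nonellipticEvol sg g 0 x‖ₑ ^ 2 ≤
      ENNReal.ofReal (4 * (2 * π) ^ N) * M := by
    intro u
    calc _ ≤ ∫⁻ x, (2 * ‖nonellipticEvol sg g u x‖ₑ ^ 2 + 2 * ‖nonellipticEvol sg g 0 x‖ₑ ^ 2) :=
          lintegral_mono fun x => enorm_sub_sq_le _ _
      _ = 2 * (∫⁻ x, ‖nonellipticEvol sg g u x‖ₑ ^ 2) +
          2 * (∫⁻ x, ‖nonellipticEvol sg g 0 x‖ₑ ^ 2) := by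
          rw [lintegral_add_left (((hmD u).enorm.pow_const 2).const_mul 2),
            lintegral_const_mul' _ _ (by norm_num), lintegral_const_mul' _ _ (by norm_num)]
      _ ≤ 2 * (ENNReal.ofReal ((2 * π) ^ N) * M) + 2 * (ENNReal.ofReal ((2 * π) ^ N) * M) := by
          gcongr <;> exact lintegral_evol_sq_le _ hg
      _ = _ := by
          rw [ENNReal.ofReal_mul (by norm_num), ENNReal.ofReal_ofNat]; ring
  have hB : ∀ u, ∫⁻ x,
      ‖nonellipticEvol sg (fun ξ => Complex.I * (phaseQ sg ξ : ℂ) * g ξ) u x‖ₑ ^ 2 ≤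
      ENNReal.ofReal ((2 * π) ^ N) * (ENNReal.ofReal ((R ^ 2) ^ 2) * M) := by
    intro u
    refine (lintegral_evol_sq_le _ hqg).trans ?_
    gcongr
    rw [hM, ← lintegral_const_mul' _ _ ENNReal.ofReal_ne_top]
    refine lintegral_mono fun ξ => ?_
    have h1 := norm_gen_le hsg hR ξ
    have h2 := ENNReal.ofReal_le_ofReal (pow_le_pow_left₀ (norm_nonneg _) h1 2)
    rwa [mul_pow, ENNReal.ofReal_mul (by positivity), ENNReal.ofReal_pow (norm_nonneg _),
      ENNReal.ofReal_pow (norm_nonneg _), ofReal_norm, ofReal_norm] at h2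
  calc _ ≤ ∫⁻ u in Set.Ioc 0 β, ENNReal.ofReal (u ^ (-(1 / 2) : ℝ)) *
        (ENNReal.ofReal (5 * (2 * π) ^ N * R ^ 2) * M) := by
        refine lintegral_mono fun u => ?_
        have hmS : Measurable fun x =>
            nonellipticEvol sg g u x - nonellipticEvol sg g 0 x := (hmD u).sub (hmD 0)
        rw [lintegral_const_mul' _ _ ENNReal.ofReal_ne_top,
          lintegral_add_left ((hmS.enorm.pow_const 2).const_mul _),
          lintegral_const_mul' _ _ ENNReal.ofReal_ne_top,
          lintegral_const_mul' _ _ ENNReal.ofReal_ne_top]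
        gcongr ENNReal.ofReal (u ^ (-(1 / 2) : ℝ)) * ?_
        calc _ ≤ ENNReal.ofReal (R ^ 2) * (ENNReal.ofReal (4 * (2 * π) ^ N) * M) +
              ENNReal.ofReal (R ^ 2)⁻¹ *
                (ENNReal.ofReal ((2 * π) ^ N) * (ENNReal.ofReal ((R ^ 2) ^ 2) * M)) := by
              gcongr
              · exact hA u
              · exact hB u
          _ = _ := by
              rw [← mul_assoc, ← mul_assoc, ← mul_assoc, ← ENNReal.ofReal_mul (by positivity),
                ← ENNReal.ofReal_mul (by positivity), ← ENNReal.ofReal_mul (by positivity),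
                ← add_mul, ← ENNReal.ofReal_add (by positivity) (by positivity)]
              congr 2
              field_simp
              ring
    _ = ENNReal.ofReal (2 * √β) * (ENNReal.ofReal (5 * (2 * π) ^ N * R ^ 2) * M) := by
        rw [lintegral_mul_const _ (by fun_prop), lintegral_rpow_neg_half hβ]
    _ = _ := by
        rw [← mul_assoc, ← ENNReal.ofReal_mul (by positivity)]
        congr 2
        ring

end energy

/-! ### Summation over shells and over the sequence of times -/

theorem enorm_four_sq_le (a b c d : ℂ) :
    ‖a - b + c + d‖ₑ ^ 2 ≤ 4 * (‖a‖ₑ ^ 2 + ‖b‖ₑ ^ 2 + ‖c‖ₑ ^ 2 + ‖d‖ₑ ^ 2) := by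
  have h : ‖a - b + c + d‖ ^ 2 ≤ 4 * (‖a‖ ^ 2 + ‖b‖ ^ 2 + ‖c‖ ^ 2 + ‖d‖ ^ 2) := by
    have h1 : ‖a - b + c + d‖ ≤ ‖a‖ + ‖b‖ + ‖c‖ + ‖d‖ :=
      (norm_add_le _ _).trans (add_le_add_left ((norm_add_le _ _).trans
        (add_le_add_left (norm_sub_le _ _) _)) _)
    have h2 : ‖a - b + c + d‖ ^ 2 ≤ (‖a‖ + ‖b‖ + ‖c‖ + ‖d‖) ^ 2 := by gcongr
    nlinarith [sq_nonneg (‖a‖ - ‖b‖), sq_nonneg (‖a‖ - ‖c‖), sq_nonneg (‖a‖ - ‖d‖),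
      sq_nonneg (‖b‖ - ‖c‖), sq_nonneg (‖b‖ - ‖d‖), sq_nonneg (‖c‖ - ‖d‖)]
  have h' := ENNReal.ofReal_le_ofReal h
  rw [ENNReal.ofReal_mul (by norm_num), ENNReal.ofReal_add (by positivity) (by positivity),
    ENNReal.ofReal_add (by positivity) (by positivity),
    ENNReal.ofReal_add (by positivity) (by positivity)] at h'
  simpa [ENNReal.ofReal_pow, ofReal_norm] using h'

/-- Cauchy–Schwarz with weights `θ ^ (j - k)`, whose sum over `k ≤ j` is at most `(1 - θ)⁻¹`. The
hypothesis `t ≤ θ ^ (2j)` turns the reciprocal weight into `θ ^ k t ^ (-1/2)`, in which `j` no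
longer occurs. -/
theorem enorm_sum_sq_le {θ : ℝ} (hθ0 : 0 < θ) (hθ1 : θ < 1) {t : ℝ} (ht : 0 < t) {j : ℕ}
    (htj : t ≤ (θ ^ 2) ^ j) (d : ℕ → ℂ) :
    ‖∑ k ∈ Finset.range (j + 1), d k‖ₑ ^ 2 ≤ ENNReal.ofReal (1 - θ)⁻¹ *
      ∑ k ∈ Finset.range (j + 1),
        ENNReal.ofReal (θ ^ k) * (ENNReal.ofReal (t ^ (-(1 / 2) : ℝ)) * ‖d k‖ₑ ^ 2) := by
  set τ : ℝ := t ^ (-(1 / 2) : ℝ) with hτ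
  have hτ0 : 0 < τ := Real.rpow_pos_of_pos ht _
  have hτj : 1 ≤ θ ^ j * τ := by
    have h1 : √t ≤ θ ^ j := by
      rw [← Real.sqrt_sq (pow_pos hθ0 j).le]
      apply Real.sqrt_le_sqrt
      rwa [← pow_mul, mul_comm j 2, pow_mul]
    have h2 : τ = (√t)⁻¹ := by rw [hτ, Real.rpow_neg ht.le, Real.sqrt_eq_rpow]
    rw [h2, ← div_eq_mul_inv, le_div_iff₀ (Real.sqrt_pos.2 ht), one_mul]
    exact h1
  have hgeom : ∑ k ∈ Finset.range (j + 1), θ ^ (j - k) ≤ (1 - θ)⁻¹ := by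
    have h1 := Finset.sum_range_reflect (fun k => θ ^ k) (j + 1)
    simp only [Nat.add_sub_cancel] at h1
    rw [h1, ← tsum_geometric_of_lt_one hθ0.le hθ1]
    exact (summable_geometric_of_lt_one hθ0.le hθ1).sum_le_tsum _ fun k _ => by positivity
  have h : ‖∑ k ∈ Finset.range (j + 1), d k‖ ^ 2 ≤ (1 - θ)⁻¹ *
      ∑ k ∈ Finset.range (j + 1), θ ^ k * (τ * ‖d k‖ ^ 2) := by
    calc _ ≤ (∑ k ∈ Finset.range (j + 1), ‖d k‖) ^ 2 := by
          gcongr; exact norm_sum_le _ _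
      _ ≤ (∑ k ∈ Finset.range (j + 1), θ ^ (j - k)) *
          ∑ k ∈ Finset.range (j + 1), θ ^ k * (τ * ‖d k‖ ^ 2) := by
          refine Finset.sum_sq_le_sum_mul_sum_of_sq_le_mul _ (fun k _ => by positivity)
            (fun k _ => by positivity) fun k hk => ?_
          have hk' : k ≤ j := by simpa [Nat.lt_succ_iff] using hk
          have e : θ ^ (j - k) * (θ ^ k * (τ * ‖d k‖ ^ 2)) = (θ ^ j * τ) * ‖d k‖ ^ 2 := by
            rw [← mul_assoc, ← pow_add, Nat.sub_add_cancel hk']; ring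
          rw [e]
          nlinarith [sq_nonneg ‖d k‖]
      _ ≤ _ := by
          gcongr
  have h' := ENNReal.ofReal_le_ofReal h
  rw [ENNReal.ofReal_mul (by rw [inv_nonneg]; linarith),
    ENNReal.ofReal_sum_of_nonneg (fun k _ => by positivity), ENNReal.ofReal_pow (norm_nonneg _),
    ofReal_norm] at h'
  refine h'.trans (le_of_eq ?_)
  congr 1
  refine Finset.sum_congr rfl fun k _ => ?_
  rw [ENNReal.ofReal_mul (by positivity), ENNReal.ofReal_mul hτ0.le,
    ENNReal.ofReal_pow (norm_nonneg _), ofReal_norm]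

section maximal

variable {N : ℕ} {sg : Fin N → ℝ} {f : EuclideanSpace ℝ (Fin N) → ℂ}

/-- The part of `f` on the frequency shell `k`. -/
def piece (f : EuclideanSpace ℝ (Fin N) → ℂ) (k : ℕ) : EuclideanSpace ℝ (Fin N) → ℂ :=
  {ξ | shell ξ = k}.indicator f

/-- The part of `f` on the frequency shells strictly beyond `j`. -/
def high (f : EuclideanSpace ℝ (Fin N) → ℂ) (j : ℕ) : EuclideanSpace ℝ (Fin N) → ℂ :=
  {ξ | j < shell ξ}.indicator f

theorem measurableSet_piece (k : ℕ) :
    MeasurableSet {ξ : EuclideanSpace ℝ (Fin N) | shell ξ = k} :=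
  measurable_shell (measurableSet_singleton k)

theorem measurableSet_high (j : ℕ) :
    MeasurableSet {ξ : EuclideanSpace ℝ (Fin N) | j < shell ξ} :=
  measurable_shell (measurableSet_Ioi (a := j))

theorem integrable_piece (hf : Integrable f) (k : ℕ) : Integrable (piece f k) :=
  hf.indicator (measurableSet_piece k)

theorem integrable_high (hf : Integrable f) (j : ℕ) : Integrable (high f j) :=
  hf.indicator (measurableSet_high j)

theorem norm_le_of_piece_ne_zero {k : ℕ} (ξ : EuclideanSpace ℝ (Fin N)) (h : piece f k ξ ≠ 0) :
    ‖ξ‖ ≤ 2 ^ k := by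
  have h1 : shell ξ = k := by
    by_contra h2
    exact h (by simp [piece, h2])
  rw [← h1]
  exact norm_le_two_pow_shell ξ

theorem evol_decomp (hf : Integrable f) (j : ℕ) (t : ℝ) (x : EuclideanSpace ℝ (Fin N)) :
    nonellipticEvol sg f t x = nonellipticEvol sg (high f j) t x +
      ∑ k ∈ Finset.range (j + 1), nonellipticEvol sg (piece f k) t x := by
  unfold nonellipticEvol
  rw [← integral_finsetSum _ fun k _ => integrable_evol t x (integrable_piece hf k),
    ← integral_add (integrable_evol t x (integrable_high hf j))
      (integrable_finsetSum _ fun k _ => integrable_evol t x (integrable_piece hf k))]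
  congr 1
  ext ξ
  rw [← Finset.mul_sum, ← mul_add]
  congr 1
  simp only [piece, high, Set.indicator_apply, Set.mem_ofPred_eq, Finset.sum_ite_eq,
    Finset.mem_range]
  by_cases h : j < shell ξ
  · simp [h, show ¬ shell ξ < j + 1 by omega]
  · simp [h, show shell ξ < j + 1 by omega]

/-- High frequencies: summing over all times is affordable, since a frequency in the shell `κ`
only enters for the indices `n` with `j n < κ`, and `hcount` bounds their number by `A * W ^ κ`. -/
theorem lintegral_high_sum_le (hf : Integrable f) {t : ℕ → ℝ} {j : ℕ → ℕ} {A W : ℝ}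
    (hcount : ∀ κ : ℕ, ∑' n, (if j n < κ then (1 : ℝ≥0∞) else 0) ≤ ENNReal.ofReal (A * W ^ κ))
    (hA : 0 ≤ A) :
    ∫⁻ x, ∑' n, ‖nonellipticEvol sg (high f (j n)) (t n) x‖ₑ ^ 2 ≤
      ENNReal.ofReal ((2 * π) ^ N * A) * ∫⁻ ξ, ENNReal.ofReal (W ^ shell ξ) * ‖f ξ‖ₑ ^ 2 := by
  have hm : ∀ n, Measurable fun x => nonellipticEvol sg (high f (j n)) (t n) x := fun n => by
    have h1 : Continuous fun x : EuclideanSpace ℝ (Fin N) => (t n, x) := by fun_prop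
    have h2 := (continuous_evol (sg := sg) (integrable_high hf (j n))).comp h1
    exact h2.measurable
  rw [lintegral_tsum fun n => ((hm n).enorm.pow_const 2).aemeasurable]
  calc _ ≤ ∑' n, ENNReal.ofReal ((2 * π) ^ N) * ∫⁻ ξ, ‖high f (j n) ξ‖ₑ ^ 2 :=
        ENNReal.tsum_le_tsum fun n => lintegral_evol_sq_le _ (integrable_high hf _)
    _ = ENNReal.ofReal ((2 * π) ^ N) * ∫⁻ ξ, ∑' n, ‖high f (j n) ξ‖ₑ ^ 2 := by
        rw [ENNReal.tsum_mul_left, lintegral_tsum fun n =>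
          (integrable_high hf (j n)).1.enorm.pow_const 2]
    _ ≤ ENNReal.ofReal ((2 * π) ^ N) * ∫⁻ ξ, ENNReal.ofReal A *
          (ENNReal.ofReal (W ^ shell ξ) * ‖f ξ‖ₑ ^ 2) := by
        gcongr with ξ
        have e : ∀ n, ‖high f (j n) ξ‖ₑ ^ 2 =
            (if j n < shell ξ then (1 : ℝ≥0∞) else 0) * ‖f ξ‖ₑ ^ 2 := by
          intro n
          simp only [high, Set.indicator_apply, Set.mem_ofPred_eq]
          split_ifs <;> simp
        simp_rw [e]
        rw [ENNReal.tsum_mul_right, ← mul_assoc, ← ENNReal.ofReal_mul hA]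
        gcongr
        exact hcount _
    _ = _ := by
        rw [lintegral_const_mul' _ _ ENNReal.ofReal_ne_top, ← mul_assoc,
          ← ENNReal.ofReal_mul (by positivity)]

/-- Low frequencies: on the shell `k` the energy up to time `θ ^ (2k)` costs `4 ^ k * θ ^ k`, and the
weight `θ ^ k` brings this down to `W ^ k`. -/
theorem lintegral_low_sum_le (hsg : ∀ i, sg i = 1 ∨ sg i = -1) (hf : Integrable f) {θ W : ℝ}
    (hθ0 : 0 < θ) (hW : 4 * θ ^ 2 = W) :
    ∫⁻ x, ∑' k : ℕ, ENNReal.ofReal (θ ^ k) * lowEnergy sg (piece f k) (2 ^ k) ((θ ^ 2) ^ k) x ≤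
      ENNReal.ofReal (10 * (2 * π) ^ N) *
        ∫⁻ ξ, ENNReal.ofReal (W ^ shell ξ) * ‖f ξ‖ₑ ^ 2 := by
  have hq := fun k => integrable_gen (sg := sg) hsg
    (norm_le_of_piece_ne_zero (f := f) (k := k)) (integrable_piece hf k)
  have hW0 : 0 < W := by rw [← hW]; positivity
  rw [lintegral_tsum fun k => ((measurable_lowEnergy (integrable_piece hf k) (hq k)
    _ _).const_mul _).aemeasurable]
  calc _ ≤ ∑' k : ℕ, ENNReal.ofReal (10 * (2 * π) ^ N) *
        (ENNReal.ofReal (W ^ k) * ∫⁻ ξ, ‖piece f k ξ‖ₑ ^ 2) := by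
        refine ENNReal.tsum_le_tsum fun k => ?_
        rw [lintegral_const_mul' _ _ ENNReal.ofReal_ne_top]
        refine (mul_le_mul_right (lintegral_lowEnergy_le hsg (by positivity)
          norm_le_of_piece_ne_zero (integrable_piece hf k) (by positivity)) _).trans (le_of_eq ?_)
        rw [← mul_assoc, ← ENNReal.ofReal_mul (by positivity),
          ← mul_assoc (ENNReal.ofReal (10 * (2 * π) ^ N)), ← ENNReal.ofReal_mul (by positivity)]
        congr 2
        have e : √((θ ^ 2) ^ k) = θ ^ k := by
          rw [← pow_mul, mul_comm, pow_mul, Real.sqrt_sq (by positivity)]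
        have e4 : (4 : ℝ) ^ k = (2 ^ k) ^ 2 := by
          rw [← pow_mul, mul_comm, pow_mul]; norm_num
        rw [e, ← hW, mul_pow 4, e4]
        ring
    _ = ENNReal.ofReal (10 * (2 * π) ^ N) *
        ∫⁻ ξ, ∑' k : ℕ, ENNReal.ofReal (W ^ k) * ‖piece f k ξ‖ₑ ^ 2 := by
        rw [ENNReal.tsum_mul_left, lintegral_tsum fun k =>
          ((integrable_piece hf k).1.enorm.pow_const 2).const_mul _]
        simp_rw [lintegral_const_mul' _ _ ENNReal.ofReal_ne_top]
    _ = _ := by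
        congr 2
        ext ξ
        rw [tsum_eq_single (shell ξ)]
        · simp [piece]
        · intro k hk
          simp [piece, hk.symm]

/-- The maximal estimate on all of space, from the pointwise splitting of `e^{i t_n L}f` into the
initial datum, the high frequencies at times `0` and `t_n`, and the increments of the low
shells. -/
theorem lintegral_maximal_le (hsg : ∀ i, sg i = 1 ∨ sg i = -1) (hf : Integrable f) {θ W A : ℝ}
    (hθ0 : 0 < θ) (hθ1 : θ < 1) (hW : 4 * θ ^ 2 = W) (hW1 : 1 ≤ W) (hA : 0 ≤ A)
    {t : ℕ → ℝ} {j : ℕ → ℕ} (ht : ∀ n, 0 < t n) (htj : ∀ n, t n ≤ (θ ^ 2) ^ j n)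
    (hcount : ∀ κ : ℕ, ∑' n, (if j n < κ then (1 : ℝ≥0∞) else 0) ≤ ENNReal.ofReal (A * W ^ κ)) :
    ∫⁻ x, ⨆ n, ‖nonellipticEvol sg f (t n) x‖ₑ ^ 2 ≤
      ENNReal.ofReal (4 * (2 * π) ^ N * (1 + 2 * A + 10 * (1 - θ)⁻¹)) *
        ∫⁻ ξ, ENNReal.ofReal (W ^ shell ξ) * ‖f ξ‖ₑ ^ 2 := by
  have hθ' : 0 < (1 - θ)⁻¹ := by rw [inv_pos]; linarith
  set T0 : EuclideanSpace ℝ (Fin N) → ℝ≥0∞ := fun x =>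
    ∑' n, ‖nonellipticEvol sg (high f (j n)) 0 x‖ₑ ^ 2 with hT0
  set T1 : EuclideanSpace ℝ (Fin N) → ℝ≥0∞ := fun x =>
    ∑' n, ‖nonellipticEvol sg (high f (j n)) (t n) x‖ₑ ^ 2 with hT1
  set S : EuclideanSpace ℝ (Fin N) → ℝ≥0∞ := fun x => ∑' k : ℕ, ENNReal.ofReal (θ ^ k) *
    lowEnergy sg (piece f k) (2 ^ k) ((θ ^ 2) ^ k) x with hS
  set I := ∫⁻ ξ, ENNReal.ofReal (W ^ shell ξ) * ‖f ξ‖ₑ ^ 2 with hI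
  have hq := fun k => integrable_gen (sg := sg) hsg
    (norm_le_of_piece_ne_zero (f := f) (k := k)) (integrable_piece hf k)
  have hmev : ∀ {g : EuclideanSpace ℝ (Fin N) → ℂ} (_ : Integrable g) (u : ℝ),
      Measurable fun x => nonellipticEvol sg g u x := fun {g} hg u => by
    have h1 : Continuous fun x : EuclideanSpace ℝ (Fin N) => (u, x) := by fun_prop
    have h2 := (continuous_evol (sg := sg) hg).comp h1
    exact h2.measurable
  have hpt : ∀ x, ⨆ n, ‖nonellipticEvol sg f (t n) x‖ₑ ^ 2 ≤
      4 * (‖nonellipticEvol sg f 0 x‖ₑ ^ 2 + T0 x + T1 x + ENNReal.ofReal (1 - θ)⁻¹ * S x) := by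
    intro x
    refine iSup_le fun n => ?_
    have e : nonellipticEvol sg f (t n) x = nonellipticEvol sg f 0 x -
        nonellipticEvol sg (high f (j n)) 0 x + nonellipticEvol sg (high f (j n)) (t n) x +
        ∑ k ∈ Finset.range (j n + 1),
          (nonellipticEvol sg (piece f k) (t n) x - nonellipticEvol sg (piece f k) 0 x) := by
      rw [evol_decomp hf (j n) (t n) x, evol_decomp hf (j n) 0 x, Finset.sum_sub_distrib]
      ring
    rw [e]
    refine (enorm_four_sq_le _ _ _ _).trans ?_
    gcongr
    · exact ENNReal.le_tsum (f := fun n => ‖nonellipticEvol sg (high f (j n)) 0 x‖ₑ ^ 2) n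
    · exact ENNReal.le_tsum (f := fun n => ‖nonellipticEvol sg (high f (j n)) (t n) x‖ₑ ^ 2) n
    · refine (enorm_sum_sq_le hθ0 hθ1 (ht n) (htj n) _).trans ?_
      gcongr
      refine le_trans (Finset.sum_le_sum fun k hk => ?_) (ENNReal.sum_le_tsum (Finset.range (j n + 1)))
      gcongr
      refine le_lowEnergy (integrable_piece hf k) (hq k) (by positivity) (ht n) ((htj n).trans ?_) x
      have hk' : k ≤ j n := by simpa [Nat.lt_succ_iff] using hk
      exact pow_le_pow_of_le_one (by positivity) (pow_le_one₀ hθ0.le hθ1.le) hk'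
  have hfI : ∫⁻ ξ, ‖f ξ‖ₑ ^ 2 ≤ I := by
    refine lintegral_mono fun ξ => ?_
    refine le_mul_of_one_le_left (zero_le) ?_
    rw [← ENNReal.ofReal_one]
    exact ENNReal.ofReal_le_ofReal (one_le_pow₀ hW1)
  have m0 : Measurable T0 := Measurable.tsum fun n =>
    (hmev (integrable_high hf (j n)) 0).enorm.pow_const 2
  have m1 : Measurable T1 := Measurable.tsum fun n =>
    (hmev (integrable_high hf (j n)) (t n)).enorm.pow_const 2
  have mf : Measurable fun x => ‖nonellipticEvol sg f 0 x‖ₑ ^ 2 := (hmev hf 0).enorm.pow_const 2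
  have ma : Measurable fun x => ‖nonellipticEvol sg f 0 x‖ₑ ^ 2 + T0 x := mf.add m0
  have mb : Measurable fun x => ‖nonellipticEvol sg f 0 x‖ₑ ^ 2 + T0 x + T1 x := ma.add m1
  calc _ ≤ ∫⁻ x, 4 * (‖nonellipticEvol sg f 0 x‖ₑ ^ 2 + T0 x + T1 x +
          ENNReal.ofReal (1 - θ)⁻¹ * S x) := lintegral_mono hpt
    _ = 4 * ((∫⁻ x, ‖nonellipticEvol sg f 0 x‖ₑ ^ 2) + (∫⁻ x, T0 x) + (∫⁻ x, T1 x) +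
          ENNReal.ofReal (1 - θ)⁻¹ * ∫⁻ x, S x) := by
        rw [lintegral_const_mul' _ _ (by norm_num), lintegral_add_left mb,
          lintegral_add_left ma, lintegral_add_left mf,
          lintegral_const_mul' _ _ ENNReal.ofReal_ne_top]
    _ ≤ 4 * (ENNReal.ofReal ((2 * π) ^ N) * I + ENNReal.ofReal ((2 * π) ^ N * A) * I +
          ENNReal.ofReal ((2 * π) ^ N * A) * I +
          ENNReal.ofReal (1 - θ)⁻¹ * (ENNReal.ofReal (10 * (2 * π) ^ N) * I)) := by
        gcongr
        · exact (lintegral_evol_sq_le 0 hf).trans (by gcongr)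
        · exact lintegral_high_sum_le (t := fun _ => 0) hf hcount hA
        · exact lintegral_high_sum_le hf hcount hA
        · exact lintegral_low_sum_le hsg hf hθ0 hW
    _ = _ := by
        rw [← mul_assoc (ENNReal.ofReal (1 - θ)⁻¹), ← ENNReal.ofReal_mul hθ'.le, ← add_mul,
          ← add_mul, ← add_mul, ← ENNReal.ofReal_add (by positivity) (by positivity),
          ← ENNReal.ofReal_add (by positivity) (by positivity),
          ← ENNReal.ofReal_add (by positivity) (by positivity), ← mul_assoc,
          ← ENNReal.ofReal_ofNat, ← ENNReal.ofReal_mul (by norm_num)]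
        congr 2
        ring

end maximal

/-- The oscillating factor is unimodular, so if `f` is not integrable then every integral
defining its evolution takes the junk value `0`. -/
theorem integrable_of_integrable_evol {N : ℕ} {sg : Fin N → ℝ}
    {f : EuclideanSpace ℝ (Fin N) → ℂ} {t : ℝ} {x : EuclideanSpace ℝ (Fin N)}
    (h : Integrable (fun ξ : EuclideanSpace ℝ (Fin N) =>
      Complex.exp (Complex.I * (((∑ i, x i * ξ i) + t * ∑ i, sg i * ξ i ^ 2 : ℝ) : ℂ)) * f ξ)) :
    Integrable f := by
  have h1 : f = fun ξ => Complex.exp (Complex.I *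
      ((-((∑ i, x i * ξ i) + t * ∑ i, sg i * ξ i ^ 2) : ℝ) : ℂ)) * (Complex.exp (Complex.I *
      (((∑ i, x i * ξ i) + t * ∑ i, sg i * ξ i ^ 2 : ℝ) : ℂ)) * f ξ) := by
    ext ξ
    rw [← mul_assoc, ← Complex.exp_add, ← mul_add, ← Complex.ofReal_add, neg_add_cancel]
    simp
  have hm : AEStronglyMeasurable f := by
    rw [h1]
    refine AEStronglyMeasurable.mul (Continuous.aestronglyMeasurable ?_) h.1
    fun_prop
  refine h.mono hm (ae_of_all _ fun ξ => ?_)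
  rw [norm_mul, norm_osc, one_mul]

/-- The counting bound behind the high-frequency estimate. An index with `j n < κ` satisfies
`t n > y ^ κ`, and for `b = y ^ κ` with `y = 2 ^ (-2(1 - s))` the weak-type condition reads
`#{n | t n > b} ≤ A * b ^ (-s / (1 - s)) = A * 2 ^ (2sκ)`. -/
theorem count_le {s : ℝ} (hs0 : 0 < s) (hs1 : s < 1) {t : ℕ → ℝ}
    (hlim : Tendsto t atTop (nhds 0)) {A : ℝ}
    (hA : ∀ b : ℝ, 0 < b → b ^ (s / (1 - s)) * (Nat.card {n : ℕ | b < t n} : ℝ) ≤ A)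
    {y : ℝ} (hy : y = 2 ^ (-(2 * (1 - s)))) {j : ℕ → ℕ} (hj : ∀ n, y ^ (j n + 1) < t n) (κ : ℕ) :
    ∑' n, (if j n < κ then (1 : ℝ≥0∞) else 0) ≤
      ENNReal.ofReal (A * ((2 : ℝ) ^ (2 * s)) ^ κ) := by
  have hy0 : 0 < y := by rw [hy]; positivity
  have hy1 : y ≤ 1 := by
    rw [hy]; exact Real.rpow_le_one_of_one_le_of_nonpos (by norm_num) (by linarith)
  have hb : 0 < y ^ κ := by positivity
  set B : Set ℕ := {n | y ^ κ < t n} with hB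
  -- `Nat.card` is `0` on infinite sets, so finiteness is what makes `hA` a genuine count.
  have hBf : B.Finite := by
    have h1 : ∀ᶠ n in atTop, t n < y ^ κ := hlim.eventually (gt_mem_nhds hb)
    obtain ⟨M, hM⟩ := eventually_atTop.1 h1
    refine (Set.finite_lt_nat M).subset fun n hn => ?_
    by_contra h2
    exact absurd (hM n (not_lt.1 h2)) (not_lt.2 (le_of_lt hn))
  have hcard : (Nat.card B : ℝ) ≤ A * ((2 : ℝ) ^ (2 * s)) ^ κ := by
    have h1 := hA _ hb
    have h2 : (y ^ κ) ^ (s / (1 - s)) = (((2 : ℝ) ^ (2 * s)) ^ κ)⁻¹ := by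
      rw [← Real.rpow_natCast y κ, ← Real.rpow_natCast _ κ, hy, ← Real.rpow_mul (by positivity),
        ← Real.rpow_mul (by positivity), ← Real.rpow_mul (by positivity),
        ← Real.rpow_neg (by norm_num)]
      congr 1
      have : 1 - s ≠ 0 := by linarith
      field_simp
    rw [h2, inv_mul_le_iff₀ (by positivity)] at h1
    rw [mul_comm]
    exact h1
  calc _ ≤ ∑' n, B.indicator (fun _ => (1 : ℝ≥0∞)) n := by
        refine ENNReal.tsum_le_tsum fun n => ?_
        split_ifs with h
        · have : n ∈ B := lt_of_le_of_lt (pow_le_pow_of_le_one hy0.le hy1 h) (hj n)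
          rw [Set.indicator_of_mem this]
        · exact zero_le
    _ = (Nat.card B : ℝ≥0∞) := by
        have : Finite B := hBf
        rw [← tsum_subtype, ENNReal.tsum_const, mul_one, ENat.card_eq_coe_natCard,
          ENat.toENNReal_coe]
    _ = ENNReal.ofReal (Nat.card B : ℝ) := by simp
    _ ≤ _ := ENNReal.ofReal_le_ofReal hcard


/-! ### The `H^s` norm and the maximal estimate -/

theorem lintegral_shell_weight_le {N : ℕ} {s : ℝ} (hs : 0 < s)
    {f : EuclideanSpace ℝ (Fin N) → ℂ}
    (hf : Integrable (fun ξ : EuclideanSpace ℝ (Fin N) => (1 + ‖ξ‖ ^ 2) ^ s * ‖f ξ‖ ^ 2)) :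
    ∫⁻ ξ, ENNReal.ofReal (((2 : ℝ) ^ (2 * s)) ^ shell ξ) * ‖f ξ‖ₑ ^ 2 ≤
      ENNReal.ofReal (4 ^ s * sobolevNormSq s f) := by
  unfold sobolevNormSq
  rw [ENNReal.ofReal_mul (by positivity), ofReal_integral_eq_lintegral_ofReal hf
    (ae_of_all _ fun ξ => by positivity), ← lintegral_const_mul' _ _ ENNReal.ofReal_ne_top]
  refine lintegral_mono fun ξ => ?_
  have h1 : ((2 : ℝ) ^ (2 * s)) ^ shell ξ ≤ 4 ^ s * (1 + ‖ξ‖ ^ 2) ^ s := by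
    have e : ((2 : ℝ) ^ (2 * s)) ^ shell ξ = ((4 : ℝ) ^ shell ξ) ^ s := by
      have h4 : (2 : ℝ) ^ (2 * s) = 4 ^ s := by rw [Real.rpow_mul (by norm_num)]; norm_num
      rw [h4, ← Real.rpow_natCast, ← Real.rpow_natCast 4, ← Real.rpow_mul (by positivity),
        ← Real.rpow_mul (by positivity), mul_comm s]
    rw [e, ← Real.mul_rpow (by norm_num) (by positivity)]
    exact Real.rpow_le_rpow (by positivity) (four_pow_shell_le ξ) hs.le
  have h2 := mul_le_mul_of_nonneg_right h1 (sq_nonneg ‖f ξ‖)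
  rw [mul_assoc] at h2
  have h3 := ENNReal.ofReal_le_ofReal h2
  rwa [ENNReal.ofReal_mul (by positivity), ENNReal.ofReal_mul (by positivity),
    ENNReal.ofReal_pow (norm_nonneg _), ofReal_norm] at h3

/-- No measurability of `F` is needed: where `F` is not integrable its integral is `0`. -/
theorem integral_le_of_lintegral_le {α : Type*} [MeasurableSpace α] {μ : Measure α} {F : α → ℝ}
    (hF : 0 ≤ F) {K : ℝ} (hK : 0 ≤ K) (h : ∫⁻ x, ENNReal.ofReal (F x) ∂μ ≤ ENNReal.ofReal K) :
    ∫ x, F x ∂μ ≤ K := by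
  by_cases hi : Integrable F μ
  · rw [← ofReal_integral_eq_lintegral_ofReal hi (ae_of_all _ hF)] at h
    exact (ENNReal.ofReal_le_ofReal_iff hK).1 h
  · rwa [integral_undef hi]

/-- The real supremum of an unbounded family is `0`, so the inequality holds in that case too. -/
theorem ofReal_iSup_sq_le (a : ℕ → ℂ) :
    ENNReal.ofReal ((⨆ n, ‖a n‖) ^ 2) ≤ ⨆ n, ‖a n‖ₑ ^ 2 := by
  by_cases hB : ⨆ n, ‖a n‖ₑ ^ 2 = ∞
  · rw [hB]; exact le_top
  · refine ENNReal.ofReal_le_of_le_toReal ?_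
    have h0 : 0 ≤ ⨆ n, ‖a n‖ := Real.iSup_nonneg fun n => norm_nonneg _
    rw [← Real.le_sqrt h0 ENNReal.toReal_nonneg]
    refine Real.iSup_le (fun n => ?_) (Real.sqrt_nonneg _)
    apply Real.le_sqrt_of_sq_le
    have h1 := ENNReal.toReal_mono hB (le_iSup (fun n => ‖a n‖ₑ ^ 2) n)
    simpa using h1

theorem maximal_estimate_nonelliptic_schrodinger_sequence_refined
    (N : ℕ) (hN : 2 ≤ N)
    (sg : Fin N → ℝ) (hsg : ∀ i, sg i = 1 ∨ sg i = -1)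
    (hsg0 : sg ⟨0, by omega⟩ = 1) (hsg1 : sg ⟨1, by omega⟩ = -1)
    (s : ℝ) (hs0 : 0 < s) (hs12 : s < 1 / 2)
    (t : ℕ → ℝ) (ht01 : ∀ n, t n ∈ Set.Ioo (0 : ℝ) 1) (hdec : Antitone t)
    (hlim : Tendsto t atTop (nhds 0)) (hweak : weakLr (s / (1 - s)) t) :
    ∃ C : ℝ, 0 < C ∧ ∀ fhat : EuclideanSpace ℝ (Fin N) → ℂ,
      Integrable (fun ξ : EuclideanSpace ℝ (Fin N) => (1 + ‖ξ‖ ^ 2) ^ s * ‖fhat ξ‖ ^ 2) →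
      Real.sqrt (∫ x in Metric.ball (0 : EuclideanSpace ℝ (Fin N)) 1,
          (⨆ n : ℕ, ‖nonellipticEvol sg fhat (t n) x‖) ^ 2) ≤
        C * Real.sqrt (sobolevNormSq s fhat) := by
  obtain ⟨A, hA⟩ := hweak
  have hA0 : 0 ≤ A := le_trans (by positivity) (hA 1 one_pos)
  -- The shell `k` is matched with the time `θ ^ (2k) = 2 ^ (-2(1 - s)k)`: this makes the counting
  -- function at that time at most `A * 2 ^ (2sk)` and gives `4 * θ ^ 2 = 2 ^ (2s)`.
  set θ : ℝ := 2 ^ (-(1 - s)) with hθ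
  set W : ℝ := 2 ^ (2 * s) with hWdef
  have hθ0 : 0 < θ := by positivity
  have hθ1 : θ < 1 := Real.rpow_lt_one_of_one_lt_of_neg (by norm_num) (by linarith)
  have hy : θ ^ 2 = 2 ^ (-(2 * (1 - s))) := by
    rw [hθ, ← Real.rpow_natCast, ← Real.rpow_mul (by norm_num)]
    congr 1
    push_cast
    ring
  have hW : 4 * θ ^ 2 = W := by
    rw [hy, show (4 : ℝ) = 2 ^ (2 : ℝ) by norm_num, ← Real.rpow_add (by norm_num)]
    congr 1
    ring
  have hW1 : 1 ≤ W := Real.one_le_rpow (by norm_num) (by linarith)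
  have hex : ∀ n, ∃ k : ℕ, (θ ^ 2) ^ (k + 1) < t n ∧ t n ≤ (θ ^ 2) ^ k := fun n =>
    exists_nat_pow_near_of_lt_one (ht01 n).1 (ht01 n).2.le (by positivity)
      (pow_lt_one₀ hθ0.le hθ1 two_ne_zero)
  choose j hj1 hj2 using hex
  have hcount := count_le hs0 (by linarith) hlim hA hy hj1
  have hθ' : 0 < (1 - θ)⁻¹ := inv_pos.2 (by linarith)
  set C₀ : ℝ := 4 * (2 * π) ^ N * (1 + 2 * A + 10 * (1 - θ)⁻¹) with hC₀
  have hC₀pos : 0 < C₀ := by positivity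
  refine ⟨√(C₀ * 4 ^ s), by positivity, fun fhat hH => ?_⟩
  have hS0 : 0 ≤ sobolevNormSq s fhat := integral_nonneg fun ξ => by positivity
  rw [← Real.sqrt_mul (by positivity)]
  apply Real.sqrt_le_sqrt
  by_cases hf : Integrable fhat
  · refine integral_le_of_lintegral_le (fun x => sq_nonneg _) (by positivity) ?_
    calc _ ≤ ∫⁻ x in Metric.ball (0 : EuclideanSpace ℝ (Fin N)) 1,
          ⨆ n, ‖nonellipticEvol sg fhat (t n) x‖ₑ ^ 2 :=
          lintegral_mono fun x => ofReal_iSup_sq_le _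
      _ ≤ ∫⁻ x, ⨆ n, ‖nonellipticEvol sg fhat (t n) x‖ₑ ^ 2 := setLIntegral_le_lintegral _ _
      _ ≤ ENNReal.ofReal C₀ * ∫⁻ ξ, ENNReal.ofReal (W ^ shell ξ) * ‖fhat ξ‖ₑ ^ 2 :=
          lintegral_maximal_le hsg hf hθ0 hθ1 hW hW1 hA0 (fun n => (ht01 n).1) hj2 hcount
      _ ≤ ENNReal.ofReal C₀ * ENNReal.ofReal (4 ^ s * sobolevNormSq s fhat) := by
          gcongr
          exact lintegral_shell_weight_le hs0 hH
      _ = _ := by rw [← ENNReal.ofReal_mul hC₀pos.le, mul_assoc C₀]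
  · have h0 : ∀ n x, nonellipticEvol sg fhat (t n) x = 0 := fun n x =>
      integral_undef fun h => hf (integrable_of_integrable_evol h)
    simp only [h0, norm_zero, ciSup_const, ne_eq, OfNat.ofNat_ne_zero, not_false_eq_true,
      zero_pow, integral_zero]
    positivity
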